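/- Let Ω ⊆ ℝ³ be open and let u : Ω → ℝ be a smooth function with Δ_H u = 0 on Ω, and let f = (f₁,f₂,f₃) = (Xu, Yu, Tu) be the associated gradient harmonic map. Then f satisfies Δ_H f₁ = 8·T f₂, Δ_H f₂ = −8·T f₁, and Δ_H f₃ = 0 on Ω. Consequently the system decouples into the bi-Laplace equations Δ_H(Δ_H f₁) = −64·T²f₁, Δ_H(Δ_H f₂) = −64·T²f₂, and Δ_H f₃ = 0 on Ω. -/

import Mathlib

noncomputable section

open Complex

/-- The underlying space of the first Heisenberg group: ℝ³ with coordinates (x, y, t). -/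
abbrev Heis : Type := ℝ × ℝ × ℝ

/-- The left-invariant vector field X = ∂/∂x + 2y ∂/∂t, as a derivation. -/
def XD {E : Type*} [NormedAddCommGroup E] [NormedSpace ℝ E] (u : Heis → E) (p : Heis) : E :=
  fderiv ℝ u p (1, 0, 2 * p.2.1)

/-- The left-invariant vector field Y = ∂/∂y − 2x ∂/∂t, as a derivation. -/
def YD {E : Type*} [NormedAddCommGroup E] [NormedSpace ℝ E] (u : Heis → E) (p : Heis) : E :=
  fderiv ℝ u p (0, 1, -(2 * p.1))

/-- The vector field T = ∂/∂t, as a derivation. -/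
def TD {E : Type*} [NormedAddCommGroup E] [NormedSpace ℝ E] (u : Heis → E) (p : Heis) : E :=
  fderiv ℝ u p (0, 0, 1)

/-- Z = (X − iY)/2. -/
def ZD (u : Heis → ℂ) (p : Heis) : ℂ := (XD u p - Complex.I * YD u p) / 2

/-- Z̄ = (X + iY)/2. -/
def ZbD (u : Heis → ℂ) (p : Heis) : ℂ := (XD u p + Complex.I * YD u p) / 2

/-- The complexification F = f₁ + i f₂ of the horizontal components. -/
def CF (f1 f2 : Heis → ℝ) : Heis → ℂ := fun p => (f1 p : ℂ) + (f2 p : ℂ) * Complex.I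

/-- Complexification of a real-valued function. -/
def Cplx (u : Heis → ℝ) : Heis → ℂ := fun p => (u p : ℂ)

/-- The horizontal Jacobian J_F = Xf₁·Yf₂ − Yf₁·Xf₂. -/
def JF (f1 f2 : Heis → ℝ) (p : Heis) : ℝ := XD f1 p * YD f2 p - YD f1 p * XD f2 p

/-- The contact equations on Ω. -/
def ContactOn (f1 f2 f3 : Heis → ℝ) (Ω : Set Heis) : Prop :=
  ∀ p ∈ Ω, XD f3 p - 2 * f2 p * XD f1 p + 2 * f1 p * XD f2 p = 0 ∧
           YD f3 p - 2 * f2 p * YD f1 p + 2 * f1 p * YD f2 p = 0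

/-- f = (f₁,f₂,f₃) is conformal on Ω: smooth, contact, J_F > 0, and the conformality
equations hold. -/
def ConformalOn (f1 f2 f3 : Heis → ℝ) (Ω : Set Heis) : Prop :=
  ContDiffOn ℝ (⊤ : ℕ∞) f1 Ω ∧ ContDiffOn ℝ (⊤ : ℕ∞) f2 Ω ∧ ContDiffOn ℝ (⊤ : ℕ∞) f3 Ω ∧
  ContactOn f1 f2 f3 Ω ∧ (∀ p ∈ Ω, 0 < JF f1 f2 p) ∧
  ∀ p ∈ Ω, (XD f1 p) ^ 2 + (XD f2 p) ^ 2 = (YD f1 p) ^ 2 + (YD f2 p) ^ 2 ∧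
           XD f1 p * YD f1 p + XD f2 p * YD f2 p = 0

/-- The sub-Laplacian Δ_H = X² + Y². -/
def LapH {E : Type*} [NormedAddCommGroup E] [NormedSpace ℝ E] (u : Heis → E) (p : Heis) : E :=
  XD (XD u) p + YD (YD u) p

/-- The CR Schwarzian derivative S_CR(f) = (1/2)·J_F·Z²(J_F⁻¹). -/
def SCR (f1 f2 : Heis → ℝ) (p : Heis) : ℂ :=
  (1 / 2 : ℂ) * (JF f1 f2 p : ℂ) * ZD (ZD (fun q => (((JF f1 f2 q)⁻¹ : ℝ) : ℂ))) p

/-- The classical type Schwarzian S_CL(f) = Z³F/ZF − (3/2)(Z²F/ZF)². -/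
def SCL (f1 f2 : Heis → ℝ) (p : Heis) : ℂ :=
  ZD (ZD (ZD (CF f1 f2))) p / ZD (CF f1 f2) p
    - (3 / 2 : ℂ) * (ZD (ZD (CF f1 f2)) p / ZD (CF f1 f2) p) ^ 2

/-- The Preschwarzian Pf = Z(ln J_F). -/
def PS (f1 f2 : Heis → ℝ) (p : Heis) : ℂ := ZD (Cplx (fun q => Real.log (JF f1 f2 q))) p

/-- The map (f₁,f₂,f₃) packaged as a map Heis → Heis. -/
def Fmap (f1 f2 f3 : Heis → ℝ) (p : Heis) : Heis := (f1 p, f2 p, f3 p)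

/-!
All double brackets of the left-invariant fields `X`, `Y`, `T` vanish, so for each of these fields
`Z` one has `[X², Z] = 2 [X, Z] X` and `[Y², Z] = 2 [Y, Z] Y`. With `[Y, X] = 4T` this gives
`[Δ_H, X] = 8TY`, `[Δ_H, Y] = -8TX` and `[Δ_H, T] = 0`, which for harmonic `u` is the first-order
coupling of `Xu` and `Yu`; applying `Δ_H` once more and commuting it past `T` decouples the system.
-/

section DerivAlong

open VectorField
open scoped ContDiff Topology

variable {𝕜 : Type*} [NontriviallyNormedField 𝕜] {E : Type*} [NormedAddCommGroup E]
  [NormedSpace 𝕜 E] {F : Type*} [NormedAddCommGroup F] [NormedSpace 𝕜 F]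
  {V W : F → F} {u v : F → E} {p : F}

variable (𝕜) in
/-- The derivative of `u` along the vector field `V`, that is, the first-order differential
operator attached to `V`. -/
def derivAlong (V : F → F) (u : F → E) (p : F) : E :=
  fderiv 𝕜 u p (V p)

lemma derivAlong_zero_left : derivAlong 𝕜 0 u = 0 := by
  ext p
  simp [derivAlong]

lemma derivAlong_const_smul_left (c : 𝕜) : derivAlong 𝕜 (c • V) u = c • derivAlong 𝕜 V u := by
  ext p
  simp [derivAlong]

lemma derivAlong_const_smul_right (c : 𝕜) : derivAlong 𝕜 V (c • u) = c • derivAlong 𝕜 V u := by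
  ext p
  simp [derivAlong, fderiv_const_smul_field]

lemma derivAlong_add_right (hu : DifferentiableAt 𝕜 u p) (hv : DifferentiableAt 𝕜 v p) :
    derivAlong 𝕜 V (u + v) p = derivAlong 𝕜 V u p + derivAlong 𝕜 V v p := by
  simp [derivAlong, fderiv_add hu hv]

lemma derivAlong_eventuallyEq (h : u =ᶠ[𝓝 p] v) :
    derivAlong 𝕜 V u =ᶠ[𝓝 p] derivAlong 𝕜 V v :=
  h.fderiv.mono fun q hq => by rw [derivAlong, derivAlong, hq]

lemma derivAlong_eq_zero_of_eventuallyEq_zero (h : u =ᶠ[𝓝 p] 0) : derivAlong 𝕜 V u p = 0 := by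
  simp [derivAlong, h.fderiv_eq]

lemma contDiffAt_derivAlong {m n : ℕ∞ω} (hV : ContDiffAt 𝕜 m V p) (hu : ContDiffAt 𝕜 n u p)
    (hmn : m + 1 ≤ n) : ContDiffAt 𝕜 m (derivAlong 𝕜 V u) p :=
  (hu.fderiv_right hmn).clm_apply hV

variable [IsRCLikeNormedField 𝕜]

lemma derivAlong_derivAlong_swap (hV : DifferentiableAt 𝕜 V p)
    (hW : DifferentiableAt 𝕜 W p) (hu : ContDiffAt 𝕜 2 u p) :
    derivAlong 𝕜 V (derivAlong 𝕜 W u) p =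
      derivAlong 𝕜 W (derivAlong 𝕜 V u) p + derivAlong 𝕜 (lieBracket 𝕜 V W) u p :=
  (add_eq_of_eq_sub' (fderiv_apply_lieBracket hu (by simp) hW hV)).symm

lemma derivAlong_sq_derivAlong_of_lieBracket_lieBracket_eq_zero
    (hV : ContDiffAt 𝕜 2 V p) (hW : ContDiffAt 𝕜 2 W p) (hu : ContDiffAt 𝕜 3 u p)
    (hVVW : lieBracket 𝕜 V (lieBracket 𝕜 V W) p = 0) :
    derivAlong 𝕜 V (derivAlong 𝕜 V (derivAlong 𝕜 W u)) p =
      derivAlong 𝕜 W (derivAlong 𝕜 V (derivAlong 𝕜 V u)) p +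
        (2 : 𝕜) • derivAlong 𝕜 (lieBracket 𝕜 V W) (derivAlong 𝕜 V u) p := by
  have hB : ContDiffAt 𝕜 1 (lieBracket 𝕜 V W) p := hV.lieBracket_vectorField hW (by norm_num)
  have hVu : ContDiffAt 𝕜 2 (derivAlong 𝕜 V u) p := contDiffAt_derivAlong hV hu (by norm_num)
  have hWVu : DifferentiableAt 𝕜 (derivAlong 𝕜 W (derivAlong 𝕜 V u)) p :=
    (contDiffAt_derivAlong (hW.of_le one_le_two) hVu (by norm_num)).differentiableAt one_ne_zero
  have hu2 : ContDiffAt 𝕜 2 u p := hu.of_le (by norm_num)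
  have hBu : DifferentiableAt 𝕜 (derivAlong 𝕜 (lieBracket 𝕜 V W) u) p :=
    (contDiffAt_derivAlong hB hu2 (by norm_num)).differentiableAt one_ne_zero
  have hVWu : derivAlong 𝕜 V (derivAlong 𝕜 W u) =ᶠ[𝓝 p]
      derivAlong 𝕜 W (derivAlong 𝕜 V u) + derivAlong 𝕜 (lieBracket 𝕜 V W) u := by
    filter_upwards [hV.eventually (by simp), hW.eventually (by simp), hu2.eventually (by simp)]
      with q hVq hWq huq
    exact derivAlong_derivAlong_swap (hVq.differentiableAt two_ne_zero)
      (hWq.differentiableAt two_ne_zero) huq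
  have hdV := hV.differentiableAt two_ne_zero
  have hVBu : derivAlong 𝕜 (lieBracket 𝕜 V (lieBracket 𝕜 V W)) u p = 0 := by
    rw [derivAlong, hVVW, map_zero]
  rw [(derivAlong_eventuallyEq hVWu).eq_of_nhds, derivAlong_add_right hWVu hBu,
    derivAlong_derivAlong_swap hdV (hW.differentiableAt two_ne_zero) hVu,
    derivAlong_derivAlong_swap hdV (hB.differentiableAt one_ne_zero) hu2, hVBu]
  module

end DerivAlong

section Heisenberg

open VectorField
open scoped ContDiff Topology

/-- The vector field `X = ∂/∂x + 2y ∂/∂t` as a map, so that `XD` is the derivative along it. -/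
def heisX (p : Heis) : Heis := (1, 0, 2 * p.2.1)

/-- The vector field `Y = ∂/∂y − 2x ∂/∂t` as a map, so that `YD` is the derivative along it. -/
def heisY (p : Heis) : Heis := (0, 1, -(2 * p.1))

/-- The vector field `T = ∂/∂t` as a map, so that `TD` is the derivative along it. -/
def heisT (_ : Heis) : Heis := (0, 0, 1)

lemma contDiff_heisX {n : ℕ∞ω} : ContDiff ℝ n heisX := by
  unfold heisX
  fun_prop

lemma contDiff_heisY {n : ℕ∞ω} : ContDiff ℝ n heisY := by
  unfold heisY
  fun_prop

lemma contDiff_heisT {n : ℕ∞ω} : ContDiff ℝ n heisT :=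
  contDiff_const

lemma differentiable_heisT : Differentiable ℝ heisT :=
  differentiable_const _

lemma fderiv_heisX_apply (p w : Heis) : fderiv ℝ heisX p w = (0, 0, 2 * w.2.1) := by
  have h : HasFDerivAt heisX
      (.prod 0 (.prod 0 ((2 : ℝ) • .comp (.fst ℝ ℝ ℝ) (.snd ℝ ℝ (ℝ × ℝ))))) p :=
    (hasFDerivAt_const 1 p).prodMk
      ((hasFDerivAt_const 0 p).prodMk (hasFDerivAt_snd.fst.const_mul 2))
  simp [h.fderiv]

lemma fderiv_heisY_apply (p w : Heis) : fderiv ℝ heisY p w = (0, 0, -(2 * w.1)) := by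
  have h : HasFDerivAt heisY (.prod 0 (.prod 0 (-((2 : ℝ) • .fst ℝ ℝ (ℝ × ℝ))))) p :=
    (hasFDerivAt_const 0 p).prodMk
      ((hasFDerivAt_const 1 p).prodMk (hasFDerivAt_fst.const_mul 2).neg)
  simp [h.fderiv]

lemma fderiv_heisT (p : Heis) : fderiv ℝ heisT p = 0 :=
  fderiv_const_apply _

lemma lieBracket_heisX_heisY : lieBracket ℝ heisX heisY = (-4 : ℝ) • heisT := by
  ext p <;> norm_num [lieBracket, fderiv_heisX_apply, fderiv_heisY_apply, heisX, heisY, heisT]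

lemma lieBracket_heisY_heisX : lieBracket ℝ heisY heisX = (4 : ℝ) • heisT := by
  ext1 p
  simp [lieBracket_swap (V := heisY), lieBracket_heisX_heisY]

lemma lieBracket_heisX_heisT : lieBracket ℝ heisX heisT = 0 := by
  ext p <;> simp [lieBracket, fderiv_heisX_apply, fderiv_heisT, heisT]

lemma lieBracket_heisY_heisT : lieBracket ℝ heisY heisT = 0 := by
  ext p <;> simp [lieBracket, fderiv_heisY_apply, fderiv_heisT, heisT]

variable {E : Type*} [NormedAddCommGroup E] [NormedSpace ℝ E] {u v w : Heis → E} {p : Heis}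

lemma XD_eq_derivAlong (u : Heis → E) : XD u = derivAlong ℝ heisX u := rfl

lemma YD_eq_derivAlong (u : Heis → E) : YD u = derivAlong ℝ heisY u := rfl

lemma TD_eq_derivAlong (u : Heis → E) : TD u = derivAlong ℝ heisT u := rfl

lemma LapH_eq_derivAlong (u : Heis → E) : LapH u =
    derivAlong ℝ heisX (derivAlong ℝ heisX u) + derivAlong ℝ heisY (derivAlong ℝ heisY u) := rfl

lemma LapH_const_smul (c : ℝ) : LapH (c • u) = c • LapH u := by
  simp only [LapH_eq_derivAlong, derivAlong_const_smul_right, smul_add]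

lemma LapH_eventuallyEq (h : u =ᶠ[𝓝 p] v) : LapH u =ᶠ[𝓝 p] LapH v :=
  (derivAlong_eventuallyEq (derivAlong_eventuallyEq h)).add
    (derivAlong_eventuallyEq (derivAlong_eventuallyEq h))

lemma LapH_derivAlong {Z : Heis → Heis} (hZ : ContDiffAt ℝ 2 Z p) (hu : ContDiffAt ℝ 3 u p)
    (hXXZ : lieBracket ℝ heisX (lieBracket ℝ heisX Z) p = 0)
    (hYYZ : lieBracket ℝ heisY (lieBracket ℝ heisY Z) p = 0) :
    LapH (derivAlong ℝ Z u) p = derivAlong ℝ Z (LapH u) p +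
      (2 : ℝ) • (derivAlong ℝ (lieBracket ℝ heisX Z) (XD u) p +
        derivAlong ℝ (lieBracket ℝ heisY Z) (YD u) p) := by
  have differentiableAt_sq {V : Heis → Heis} (hV : ContDiff ℝ 2 V) :
      DifferentiableAt ℝ (derivAlong ℝ V (derivAlong ℝ V u)) p :=
    (contDiffAt_derivAlong (hV.contDiffAt.of_le one_le_two)
      (contDiffAt_derivAlong hV.contDiffAt hu (by norm_num)) (by norm_num)).differentiableAt
      one_ne_zero
  rw [LapH_eq_derivAlong, LapH_eq_derivAlong, Pi.add_apply,
    derivAlong_add_right (differentiableAt_sq contDiff_heisX) (differentiableAt_sq contDiff_heisY),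
    derivAlong_sq_derivAlong_of_lieBracket_lieBracket_eq_zero
      contDiff_heisX.contDiffAt hZ hu hXXZ,
    derivAlong_sq_derivAlong_of_lieBracket_lieBracket_eq_zero
      contDiff_heisY.contDiffAt hZ hu hYYZ, XD_eq_derivAlong, YD_eq_derivAlong]
  module

lemma LapH_XD (hu : ContDiffAt ℝ 3 u p) :
    LapH (XD u) p = XD (LapH u) p + (8 : ℝ) • TD (YD u) p := by
  have hXXX : lieBracket ℝ heisX (lieBracket ℝ heisX heisX) p = 0 := by simp
  have hYYX : lieBracket ℝ heisY (lieBracket ℝ heisY heisX) p = 0 := by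
    rw [lieBracket_heisY_heisX, lieBracket_const_smul_right (differentiable_heisT p),
      lieBracket_heisY_heisT, Pi.zero_apply, smul_zero]
  rw [XD_eq_derivAlong, LapH_derivAlong contDiff_heisX.contDiffAt hu hXXX hYYX,
    lieBracket_self, lieBracket_heisY_heisX, derivAlong_zero_left, derivAlong_const_smul_left,
    ← TD_eq_derivAlong, ← XD_eq_derivAlong]
  simp only [Pi.zero_apply, Pi.smul_apply]
  module

lemma LapH_YD (hu : ContDiffAt ℝ 3 u p) :
    LapH (YD u) p = YD (LapH u) p + (-8 : ℝ) • TD (XD u) p := by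
  have hXXY : lieBracket ℝ heisX (lieBracket ℝ heisX heisY) p = 0 := by
    rw [lieBracket_heisX_heisY, lieBracket_const_smul_right (differentiable_heisT p),
      lieBracket_heisX_heisT, Pi.zero_apply, smul_zero]
  have hYYY : lieBracket ℝ heisY (lieBracket ℝ heisY heisY) p = 0 := by simp
  rw [YD_eq_derivAlong, LapH_derivAlong contDiff_heisY.contDiffAt hu hXXY hYYY,
    lieBracket_self, lieBracket_heisX_heisY, derivAlong_zero_left, derivAlong_const_smul_left,
    ← TD_eq_derivAlong, ← YD_eq_derivAlong]
  simp only [Pi.zero_apply, Pi.smul_apply]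
  module

lemma LapH_TD (hu : ContDiffAt ℝ 3 u p) : LapH (TD u) p = TD (LapH u) p := by
  rw [TD_eq_derivAlong, LapH_derivAlong contDiff_heisT.contDiffAt hu
    (by simp [lieBracket_heisX_heisT]) (by simp [lieBracket_heisY_heisT]), lieBracket_heisX_heisT,
    lieBracket_heisY_heisT, derivAlong_zero_left, derivAlong_zero_left, ← TD_eq_derivAlong]
  simp

lemma LapH_LapH_of_eventuallyEq_const_smul_TD {a b : ℝ} (hw : ContDiffAt ℝ 3 w p)
    (hv_lap : LapH v =ᶠ[𝓝 p] a • TD w) (hw_lap : LapH w =ᶠ[𝓝 p] b • TD v) :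
    LapH (LapH v) p = (a * b) • TD (TD v) p := calc
  LapH (LapH v) p = a • LapH (TD w) p := by
    rw [(LapH_eventuallyEq hv_lap).eq_of_nhds, LapH_const_smul, Pi.smul_apply]
  _ = a • TD (LapH w) p := by rw [LapH_TD hw]
  _ = a • TD (b • TD v) p := by
    rw [TD_eq_derivAlong (LapH w), (derivAlong_eventuallyEq hw_lap).eq_of_nhds,
      ← TD_eq_derivAlong]
  _ = (a * b) • TD (TD v) p := by
    rw [TD_eq_derivAlong (b • TD v), derivAlong_const_smul_right, Pi.smul_apply, smul_smul,
      ← TD_eq_derivAlong]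

end Heisenberg

theorem stmt_15_general {E : Type*} [NormedAddCommGroup E] [NormedSpace ℝ E] {Ω : Set Heis}
    (hΩ : IsOpen Ω) {u : Heis → E} (hu : ContDiffOn ℝ 4 u Ω) (hharm : ∀ p ∈ Ω, LapH u p = 0) :
    (∀ p ∈ Ω,
      LapH (XD u) p = (8 : ℝ) • TD (YD u) p ∧
      LapH (YD u) p = -((8 : ℝ) • TD (XD u) p) ∧
      LapH (TD u) p = 0) ∧
    (∀ p ∈ Ω,
      LapH (LapH (XD u)) p = -((64 : ℝ) • TD (TD (XD u)) p) ∧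
      LapH (LapH (YD u)) p = -((64 : ℝ) • TD (TD (YD u)) p) ∧
      LapH (TD u) p = 0) := by
  have hu4 {p} (hp : p ∈ Ω) : ContDiffAt ℝ 4 u p := hu.contDiffAt (hΩ.mem_nhds hp)
  have hu3 {p} (hp : p ∈ Ω) : ContDiffAt ℝ 3 u p := (hu4 hp).of_le (by norm_num)
  have deriv_lap {p} (hp : p ∈ Ω) (V) : derivAlong ℝ V (LapH u) p = 0 :=
    derivAlong_eq_zero_of_eventuallyEq_zero (Set.EqOn.eventuallyEq_of_mem hharm (hΩ.mem_nhds hp))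
  have lap_X : Set.EqOn (LapH (XD u)) ((8 : ℝ) • TD (YD u)) Ω := fun p hp =>
    (LapH_XD (hu3 hp)).trans (add_eq_right.2 (deriv_lap hp heisX))
  have lap_Y : Set.EqOn (LapH (YD u)) ((-8 : ℝ) • TD (XD u)) Ω := fun p hp =>
    (LapH_YD (hu3 hp)).trans (add_eq_right.2 (deriv_lap hp heisY))
  have lap_T {p} (hp : p ∈ Ω) : LapH (TD u) p = 0 :=
    (LapH_TD (hu3 hp)).trans (deriv_lap hp heisT)
  refine ⟨fun p hp => ⟨lap_X hp, (lap_Y hp).trans (neg_smul _ _), lap_T hp⟩, fun p hp => ?_⟩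
  have lap_X_nhds := lap_X.eventuallyEq_of_mem (hΩ.mem_nhds hp)
  have lap_Y_nhds := lap_Y.eventuallyEq_of_mem (hΩ.mem_nhds hp)
  have hX : ContDiffAt ℝ 3 (XD u) p :=
    contDiffAt_derivAlong contDiff_heisX.contDiffAt (hu4 hp) (by norm_num)
  have hY : ContDiffAt ℝ 3 (YD u) p :=
    contDiffAt_derivAlong contDiff_heisY.contDiffAt (hu4 hp) (by norm_num)
  rw [LapH_LapH_of_eventuallyEq_const_smul_TD hY lap_X_nhds lap_Y_nhds,
    LapH_LapH_of_eventuallyEq_const_smul_TD hX lap_Y_nhds lap_X_nhds]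
  norm_num [lap_T hp]

/-- the gradient harmonic map f = (Xu, Yu, Tu) of a sub-Laplacian harmonic
function u satisfies Δ_H f₁ = 8Tf₂, Δ_H f₂ = −8Tf₁, Δ_H f₃ = 0, and consequently the
bi-Laplace system Δ_H(Δ_H f₁) = −64T²f₁, Δ_H(Δ_H f₂) = −64T²f₂, Δ_H f₃ = 0. -/
theorem stmt_15 (Ω : Set Heis) (hΩ : IsOpen Ω) (u : Heis → ℝ)
    (hu : ContDiffOn ℝ (⊤ : ℕ∞) u Ω) (hharm : ∀ p ∈ Ω, LapH u p = 0) :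
    (∀ p ∈ Ω,
      LapH (XD u) p = 8 * TD (YD u) p ∧
      LapH (YD u) p = -(8 * TD (XD u) p) ∧
      LapH (TD u) p = 0) ∧
    (∀ p ∈ Ω,
      LapH (LapH (XD u)) p = -(64 * TD (TD (XD u)) p) ∧
      LapH (LapH (YD u)) p = -(64 * TD (TD (YD u)) p) ∧
      LapH (TD u) p = 0) :=
  stmt_15_general hΩ (hu.of_le (by norm_cast)) hharm
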